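/- arXiv:1303.4104 — 3 statements merged into one kernel-verified Lean document; each statement's English description precedes it below -/
import Mathlib

section
/- Let B ⊆ ℝⁿ be an open set and P ⊆ B an arbitrary subset. Every map v_P : P → ℝᵐ that is Lipschitz with constant K is the restriction to P of a map v : ℝⁿ → ℝᵐ that is Lipschitz with the same constant K. Consequently, for every body P ⊆ B, the restriction map sending a locally Lipschitz map B → ℝᵐ to its restriction P → ℝᵐ is surjective onto the Lipschitz maps on P. -/
/-!
A `K`-Lipschitz map from an inner product space `E` to a Hilbert space `F`, defined on all of `E`,
is the same as a maximal `K`-Lipschitz graph in `E × F`, so it suffices to extend a `K`-Lipschitz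
map by one point `p`: the closed balls of radius `K * dist p x` around the values at the points `x`
must have a common point. Closed balls of a Hilbert space are weakly compact, so it is enough to
treat finitely many of them.

For finitely many points `xᵢ` with values `yᵢ`, the minimax theorem reduces the system
`dist q yᵢ ≤ K * dist p xᵢ` to a single weighted average of the squared inequalities, with weights
`wᵢ` known in advance. This one is solved by the barycenter `q = ∑ wᵢ yᵢ`: the variance of the `yᵢ`
is half their mean squared pairwise distance, hence at most `K ^ 2` times the variance of the `xᵢ`,
which in turn is at most their mean squared distance to `p`.
-/

open Set Topology
open scoped NNReal

section Variance

variable {ι E : Type*} [SeminormedAddCommGroup E] [InnerProductSpace ℝ E]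
  {s : Finset ι} {w : ι → ℝ}

lemma sum_mul_dist_sq_eq_add (hw : ∑ i ∈ s, w i = 1) (x : ι → E) (p : E) :
    ∑ i ∈ s, w i * dist p (x i) ^ 2 =
      dist p (∑ i ∈ s, w i • x i) ^ 2 + ∑ i ∈ s, w i * dist (∑ j ∈ s, w j • x j) (x i) ^ 2 := by
  set c := ∑ i ∈ s, w i • x i with hc
  have expand (i : ι) : dist p (x i) ^ 2 =
      dist p c ^ 2 + 2 * inner ℝ (p - c) (c - x i) + dist c (x i) ^ 2 := by
    simp only [dist_eq_norm]
    rw [← norm_add_sq_real, sub_add_sub_cancel]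
  have centered : ∑ i ∈ s, w i • (c - x i) = 0 := by
    simp only [smul_sub, Finset.sum_sub_distrib, ← Finset.sum_smul, hw, one_smul, ← hc, sub_self]
  have cross : ∑ i ∈ s, w i * inner ℝ (p - c) (c - x i) = 0 := by
    simp only [← real_inner_smul_right, ← inner_sum, centered, inner_zero_right]
  calc ∑ i ∈ s, w i * dist p (x i) ^ 2
      = (∑ i ∈ s, w i) * dist p c ^ 2 + 2 * ∑ i ∈ s, w i * inner ℝ (p - c) (c - x i)
          + ∑ i ∈ s, w i * dist c (x i) ^ 2 := by
        rw [Finset.sum_mul, Finset.mul_sum, ← Finset.sum_add_distrib, ← Finset.sum_add_distrib]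
        exact Finset.sum_congr rfl fun i _ ↦ by rw [expand]; ring
    _ = dist p c ^ 2 + ∑ i ∈ s, w i * dist c (x i) ^ 2 := by rw [hw, cross]; ring

lemma sum_sum_mul_dist_sq (hw : ∑ i ∈ s, w i = 1) (x : ι → E) :
    ∑ i ∈ s, ∑ j ∈ s, w i * w j * dist (x i) (x j) ^ 2 =
      2 * ∑ i ∈ s, w i * dist (∑ j ∈ s, w j • x j) (x i) ^ 2 := by
  set c := ∑ i ∈ s, w i • x i
  set V := ∑ i ∈ s, w i * dist c (x i) ^ 2 with hV
  calc ∑ i ∈ s, ∑ j ∈ s, w i * w j * dist (x i) (x j) ^ 2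
      = ∑ i ∈ s, w i * (dist (x i) c ^ 2 + V) :=
        Finset.sum_congr rfl fun i _ ↦ by
          rw [← sum_mul_dist_sq_eq_add hw x (x i), Finset.mul_sum]
          simp only [mul_assoc]
    _ = V + (∑ i ∈ s, w i) * V := by
        simp only [mul_add, Finset.sum_add_distrib, Finset.sum_mul, dist_comm _ c, ← hV]
    _ = 2 * V := by rw [hw]; ring

lemma sum_mul_dist_barycenter_sq_le {F : Type*} [SeminormedAddCommGroup F]
    [InnerProductSpace ℝ F] {K : ℝ} {x : ι → E} {y : ι → F}
    (hw₀ : ∀ i ∈ s, 0 ≤ w i) (hw : ∑ i ∈ s, w i = 1)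
    (hxy : ∀ i ∈ s, ∀ j ∈ s, dist (y i) (y j) ≤ K * dist (x i) (x j)) (p : E) :
    ∑ i ∈ s, w i * dist (∑ j ∈ s, w j • y j) (y i) ^ 2 ≤
      ∑ i ∈ s, w i * (K * dist p (x i)) ^ 2 := by
  have pairwise : ∑ i ∈ s, ∑ j ∈ s, w i * w j * dist (y i) (y j) ^ 2 ≤
      K ^ 2 * ∑ i ∈ s, ∑ j ∈ s, w i * w j * dist (x i) (x j) ^ 2 := by
    simp only [Finset.mul_sum]
    refine Finset.sum_le_sum fun i hi ↦ Finset.sum_le_sum fun j hj ↦ ?_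
    calc w i * w j * dist (y i) (y j) ^ 2
        ≤ w i * w j * (K * dist (x i) (x j)) ^ 2 :=
          mul_le_mul_of_nonneg_left (pow_le_pow_left₀ dist_nonneg (hxy i hi j hj) 2)
            (mul_nonneg (hw₀ i hi) (hw₀ j hj))
      _ = K ^ 2 * (w i * w j * dist (x i) (x j) ^ 2) := by ring
  rw [sum_sum_mul_dist_sq hw, sum_sum_mul_dist_sq hw] at pairwise
  calc ∑ i ∈ s, w i * dist (∑ j ∈ s, w j • y j) (y i) ^ 2
      ≤ K ^ 2 * ∑ i ∈ s, w i * dist (∑ j ∈ s, w j • x j) (x i) ^ 2 := by linarith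
    _ ≤ K ^ 2 * ∑ i ∈ s, w i * dist p (x i) ^ 2 := by
        rw [sum_mul_dist_sq_eq_add hw x p]
        gcongr
        exact le_add_of_nonneg_left (sq_nonneg _)
    _ = ∑ i ∈ s, w i * (K * dist p (x i)) ^ 2 := by
        rw [Finset.mul_sum]
        exact Finset.sum_congr rfl fun i _ ↦ by ring

end Variance

section Minimax

variable {ι E : Type*} {X : Set E} {g : ι → E → ℝ} {s : Finset ι} {w : ι → ℝ}

lemma lowerSemicontinuousOn_sum_mul [TopologicalSpace E] (hw : ∀ i ∈ s, 0 ≤ w i)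
    (hg : ∀ i ∈ s, LowerSemicontinuousOn (g i) X) :
    LowerSemicontinuousOn (fun x ↦ ∑ i ∈ s, w i * g i x) X :=
  lowerSemicontinuousOn_sum fun i hi ↦ (continuous_const_mul (w i)).comp_lowerSemicontinuousOn
    (hg i hi) (monotone_mul_left_of_nonneg (hw i hi))

variable [AddCommGroup E] [Module ℝ E]

lemma convexOn_sum_mul (hX : Convex ℝ X) (hw : ∀ i ∈ s, 0 ≤ w i)
    (hg : ∀ i ∈ s, ConvexOn ℝ X (g i)) : ConvexOn ℝ X fun x ↦ ∑ i ∈ s, w i * g i x := by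
  rw [← Finset.sum_fn]
  exact Finset.sum_induction _ (ConvexOn ℝ X) (fun _ _ ↦ ConvexOn.add) (convexOn_const 0 hX)
    fun i hi ↦ (hg i hi).smul (hw i hi)

lemma exists_forall_nonpos_of_forall_stdSimplex [Fintype ι] [Nonempty ι]
    [TopologicalSpace E] [IsTopologicalAddGroup E] [ContinuousSMul ℝ E] (hXc : IsCompact X)
    (hg : ∀ i, ConvexOn ℝ X (g i)) (hgc : ∀ i, LowerSemicontinuousOn (g i) X)
    (h : ∀ w ∈ stdSimplex ℝ ι, ∃ x ∈ X, ∑ i, w i * g i x ≤ 0) :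
    ∃ x ∈ X, ∀ i, g i x ≤ 0 := by
  classical
  let i₀ : ι := Classical.arbitrary ι
  have hX : Convex ℝ X := (hg i₀).1
  have hne : X.Nonempty := (h _ (single_mem_stdSimplex ℝ i₀)).imp fun _ hx ↦ hx.1
  let Φ (x : E) (w : ι → ℝ) : ℝ := ∑ i, w i * g i x
  have continuous_weights (x : E) : Continuous (Φ x) := by fun_prop
  have concave_weights (x : E) : ConcaveOn ℝ (stdSimplex ℝ ι) (Φ x) :=
    (Fintype.linearCombination ℝ (g · x)).concaveOn (convex_stdSimplex ℝ ι)
  obtain ⟨a, ha, w, hw, saddle⟩ := Sion.exists_isSaddlePointOn (f := Φ) hne hX hXc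
    (fun w hw ↦ lowerSemicontinuousOn_sum_mul (fun i _ ↦ hw.1 i) fun i _ ↦ hgc i)
    (fun w hw ↦ (convexOn_sum_mul hX (fun i _ ↦ hw.1 i) fun i _ ↦ hg i).quasiconvexOn)
    (convex_stdSimplex ℝ ι) ⟨_, single_mem_stdSimplex ℝ i₀⟩ (isCompact_stdSimplex ℝ ι)
    (fun x _ ↦ (continuous_weights x).upperSemicontinuous.upperSemicontinuousOn _)
    (fun x _ ↦ (concave_weights x).quasiconcaveOn)
  obtain ⟨x, hx, hwx⟩ := h w hw
  refine ⟨a, ha, fun i ↦ ?_⟩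
  calc g i a = Φ a (Pi.single i 1) := by simp [Φ, Pi.single_apply]
    _ ≤ Φ x w := saddle x hx _ (single_mem_stdSimplex ℝ i)
    _ ≤ 0 := hwx

end Minimax

lemma exists_forall_dist_le_of_finite {ι E F : Type*} [Finite ι]
    [SeminormedAddCommGroup E] [InnerProductSpace ℝ E]
    [SeminormedAddCommGroup F] [InnerProductSpace ℝ F] {K : ℝ≥0} {x : ι → E} {y : ι → F}
    (hxy : ∀ i j, dist (y i) (y j) ≤ K * dist (x i) (x j)) (p : E) :
    ∃ q, ∀ i, dist q (y i) ≤ K * dist p (x i) := by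
  cases nonempty_fintype ι
  rcases isEmpty_or_nonempty ι with hι | hι
  · exact ⟨0, hι.elim⟩
  have hX : Convex ℝ (convexHull ℝ (range y)) := convex_convexHull ℝ _
  let g (i : ι) (q : F) : ℝ := dist q (y i) ^ 2 - (K * dist p (x i)) ^ 2
  have convex_g (i : ι) : ConvexOn ℝ (convexHull ℝ (range y)) (g i) :=
    ((convexOn_dist (y i) hX).pow (fun _ _ ↦ dist_nonneg) 2).sub (concaveOn_const _ hX)
  have continuous_g (i : ι) : Continuous (g i) := by fun_prop
  have barycenter (w : ι → ℝ) (hw : w ∈ stdSimplex ℝ ι) :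
      ∃ q ∈ convexHull ℝ (range y), ∑ i, w i * g i q ≤ 0 := by
    refine ⟨∑ i, w i • y i, hX.sum_mem (fun i _ ↦ hw.1 i) hw.2 fun i _ ↦
      subset_convexHull ℝ _ (mem_range_self i), ?_⟩
    simp only [g, mul_sub, Finset.sum_sub_distrib, sub_nonpos]
    exact sum_mul_dist_barycenter_sq_le (fun i _ ↦ hw.1 i) hw.2 (fun i _ j _ ↦ hxy i j) p
  obtain ⟨q, -, hq⟩ := exists_forall_nonpos_of_forall_stdSimplex
    ((finite_range y).isCompact_convexHull ℝ) convex_g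
    (fun i ↦ (continuous_g i).lowerSemicontinuous.lowerSemicontinuousOn _) barycenter
  exact ⟨q, fun i ↦ le_of_sq_le_sq (sub_nonpos.1 (hq i)) (by positivity)⟩

lemma nonempty_iInter_closedBall_of_finset (𝕜 : Type*) {ι H : Type*} [RCLike 𝕜]
    [NormedAddCommGroup H] [InnerProductSpace 𝕜 H] [CompleteSpace H] {c : ι → H} {r : ι → ℝ}
    (h : ∀ u : Finset ι, (⋂ i ∈ u, Metric.closedBall (c i) (r i)).Nonempty) :
    (⋂ i, Metric.closedBall (c i) (r i)).Nonempty := by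
  classical
  rcases isEmpty_or_nonempty ι with hι | ⟨⟨i₀⟩⟩
  · simp
  let D := InnerProductSpace.toDual 𝕜 H
  let ball (i : ι) : Set (WeakDual 𝕜 H) :=
    WeakDual.toStrongDual ⁻¹' Metric.closedBall (D (c i)) (r i)
  have toDual_mem_ball {q : H} {i : ι} :
      StrongDual.toWeakDual (D q) ∈ ball i ↔ q ∈ Metric.closedBall (c i) (r i) := by
    simp [ball, D.dist_map]
  obtain ⟨φ, -, hφ⟩ := (WeakDual.isCompact_closedBall (D (c i₀)) (r i₀)).inter_iInter_nonempty ball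
    (fun i ↦ WeakDual.isClosed_closedBall _ _) fun u ↦ by
      obtain ⟨q, hq⟩ := h (insert i₀ u)
      refine ⟨StrongDual.toWeakDual (D q), ?_⟩
      simp only [Finset.set_biInter_insert, mem_inter_iff, mem_iInter₂] at hq
      exact ⟨toDual_mem_ball.2 hq.1, mem_iInter₂.2 fun i hi ↦ toDual_mem_ball.2 (hq.2 i hi)⟩
  refine ⟨D.symm (WeakDual.toStrongDual φ), mem_iInter.2 fun i ↦ toDual_mem_ball.1 ?_⟩
  simpa using mem_iInter.1 hφ i

/-- `G` is the graph of a `K`-Lipschitz partial map from `α` to `β`. Graphs make the extension of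
partial maps an inclusion of sets, so that a maximal one exists. When `β` is a metric space, the
condition for pairs with the same first component makes `G` single-valued. -/
def IsLipschitzGraph {α β : Type*} [PseudoMetricSpace α] [PseudoMetricSpace β] (K : ℝ≥0)
    (G : Set (α × β)) : Prop :=
  ∀ a ∈ G, ∀ b ∈ G, dist a.2 b.2 ≤ K * dist a.1 b.1

namespace IsLipschitzGraph

section PseudoMetric

variable {α β : Type*} [PseudoMetricSpace α] [PseudoMetricSpace β] {K : ℝ≥0}
  {G : Set (α × β)}

lemma image_of_lipschitzOnWith {f : α → β} {s : Set α} (hf : LipschitzOnWith K f s) :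
    IsLipschitzGraph K ((fun x ↦ (x, f x)) '' s) := by
  rintro _ ⟨x, hx, rfl⟩ _ ⟨y, hy, rfl⟩
  exact hf.dist_le_mul x hx y hy

lemma insert_of_forall_dist_le (hG : IsLipschitzGraph K G) {p : α} {q : β}
    (hq : ∀ a ∈ G, dist q a.2 ≤ K * dist p a.1) : IsLipschitzGraph K (insert (p, q) G) := by
  rintro a (rfl | ha) b (rfl | hb)
  · simp
  · exact hq b hb
  · rw [dist_comm, dist_comm a.1]
    exact hq a ha
  · exact hG a ha b hb

lemma isOfFiniteCharacter :
    Order.IsOfFiniteCharacter {G : Set (α × β) | IsLipschitzGraph K G} := by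
  refine fun G ↦ ⟨fun hG T hT _ a ha b hb ↦ hG a (hT ha) b (hT hb), fun h a ha b hb ↦ ?_⟩
  exact h {a, b} (pair_subset ha hb) (toFinite _) a (by simp) b (by simp)

end PseudoMetric

variable {E F : Type*} [SeminormedAddCommGroup E] [InnerProductSpace ℝ E]
  [NormedAddCommGroup F] [InnerProductSpace ℝ F] [CompleteSpace F] {K : ℝ≥0} {G : Set (E × F)}

lemma exists_insert (hG : IsLipschitzGraph K G) (p : E) :
    ∃ q, IsLipschitzGraph K (insert (p, q) G) := by
  obtain ⟨q, hq⟩ : (⋂ a : G, Metric.closedBall a.1.2 (K * dist p a.1.1)).Nonempty := by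
    refine nonempty_iInter_closedBall_of_finset ℝ fun u ↦ ?_
    obtain ⟨q, hq⟩ := exists_forall_dist_le_of_finite (x := fun a : u ↦ a.1.1.1)
      (y := fun a : u ↦ a.1.1.2) (fun a b ↦ hG _ a.1.2 _ b.1.2) p
    exact ⟨q, mem_iInter₂.2 fun a ha ↦ hq ⟨a, ha⟩⟩
  exact ⟨q, hG.insert_of_forall_dist_le fun a ha ↦ mem_iInter.1 hq ⟨a, ha⟩⟩

lemma exists_mem_of_maximal (hG : Maximal (IsLipschitzGraph K) G) (p : E) : ∃ q, (p, q) ∈ G := by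
  obtain ⟨q, hq⟩ := hG.prop.exists_insert p
  exact ⟨q, hG.le_of_ge hq (subset_insert _ _) (mem_insert _ _)⟩

end IsLipschitzGraph

/-- **Kirszbraun's theorem**. -/
theorem extension_of_lipschitz_on_body_general {E F : Type*}
    [SeminormedAddCommGroup E] [InnerProductSpace ℝ E]
    [NormedAddCommGroup F] [InnerProductSpace ℝ F] [CompleteSpace F]
    {K : ℝ≥0} {f : E → F} {s : Set E} (hf : LipschitzOnWith K f s) :
    ∃ v : E → F, LipschitzWith K v ∧ EqOn v f s := by
  obtain ⟨G, hfG, hG⟩ := IsLipschitzGraph.isOfFiniteCharacter.exists_maximal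
    (IsLipschitzGraph.image_of_lipschitzOnWith hf)
  choose v hv using IsLipschitzGraph.exists_mem_of_maximal hG
  refine ⟨v, .of_dist_le_mul fun x y ↦ hG.prop _ (hv x) _ (hv y), fun x hx ↦ ?_⟩
  have : dist (v x) (f x) ≤ K * dist x x := hG.prop _ (hv x) _ (hfG (mem_image_of_mem _ hx))
  simpa using this

/-- **Kirszbraun extension and surjectivity of the restriction map.**
Let `B ⊆ ℝⁿ` be open and `P ⊆ B` a subset.  Every map `vP` that is Lipschitz with
constant `K` on `P` extends to a map `v : ℝⁿ → ℝᵐ` that is Lipschitz with the same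
constant `K`; consequently there is a locally Lipschitz map `w` on `B` restricting
to `vP` on `P`, i.e. the restriction map from locally Lipschitz maps on `B` to
Lipschitz maps on `P` is surjective. -/
theorem extension_of_lipschitz_on_body
    (n m : ℕ) (B : Set (EuclideanSpace ℝ (Fin n))) (hB : IsOpen B)
    (P : Set (EuclideanSpace ℝ (Fin n))) (hPB : P ⊆ B)
    (K : ℝ≥0) (vP : EuclideanSpace ℝ (Fin n) → EuclideanSpace ℝ (Fin m))
    (hvP : LipschitzOnWith K vP P) :
    (∃ v : EuclideanSpace ℝ (Fin n) → EuclideanSpace ℝ (Fin m),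
        LipschitzWith K v ∧ Set.EqOn v vP P) ∧
    (∃ w : EuclideanSpace ℝ (Fin n) → EuclideanSpace ℝ (Fin m),
        LocallyLipschitzOn B w ∧ Set.EqOn w vP P) := by
  obtain ⟨v, hv, hvP'⟩ := extension_of_lipschitz_on_body_general hvP
  exact ⟨⟨v, hv, hvP'⟩, v, hv.locallyLipschitz.locallyLipschitzOn, hvP'⟩
end

section
/- Let B ⊆ ℝⁿ be open and let κ : B → ℝⁿ be injective and a Lipschitz immersion, i.e. every point x ∈ B has a neighborhood U_x ⊆ B and constants 0 < c_x ≤ d_x < ∞ with c_x|y−z| ≤ |κ(y)−κ(z)| ≤ d_x|y−z| for all y, z ∈ U_x. Then κ(B) is an open subset of ℝⁿ, κ is a homeomorphism of B onto κ(B), and the inverse map κ⁻¹ : κ(B) → B is locally Lipschitz. -/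
open Set Topology
open scoped NNReal

/-!
Invariance of domain by a mapping degree for Lipschitz maps. If `f` is Lipschitz and `U` is bounded
and open, then `∫_U det Df` depends only on the values of `f` outside `U`: for large `c` the map
`c • id + f` is bijective with positive Jacobian, so `∫_U det (c • id + Df)` is the volume of the
complement of the image of `Uᶜ`, and being a polynomial in `c` it is determined down to `c = 0`.
If `η ∘ f` vanishes on `∂U`, adding `η(f) v` to `f` inside `U` multiplies the Jacobian by
`1 + (∂_v η)(f)`, hence `∫_U (∂_v η)(f) det Df = 0`. Consequently `∫_U φ(f) det Df` does not change
while `φ` is translated without its support meeting `f(∂U)`.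

If `f` is bi-Lipschitz near `x` and misses a value near `f x`, then every test function supported
near `f x` can be translated off the image, so `det Df = 0` almost everywhere near `x`. By the area
formula `f` then maps a neighbourhood of `x` to a null set, and the Lipschitz inverse makes that
neighbourhood null.
-/

section Degree

open MeasureTheory Metric Polynomial
open scoped ContDiff

variable {E : Type*} [NormedAddCommGroup E] [NormedSpace ℝ E]

theorem lipschitzWith_indicator_of_eq_zero_on_frontier {F : Type*} [NormedAddCommGroup F]
    {f : E → F} {K : ℝ≥0} (hf : LipschitzWith K f) {U : Set E} (hU : IsOpen U)
    (h0 : ∀ x ∈ frontier U, f x = 0) :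
    LipschitzWith K (U.indicator f) := by
  have crossing : ∀ x ∈ U, ∀ y ∉ U, ‖f x‖ ≤ K * dist x y := by
    intro x hx y hy
    obtain ⟨z, ⟨hzU, hzxy⟩, hz⟩ : ∃ z ∈ closure U ∩ segment ℝ x y, z ∉ U := by
      by_contra! h
      exact hy ((convex_segment x y).isPreconnected.subset_of_closure_inter_subset hU
        ⟨x, left_mem_segment ℝ x y, hx⟩ h (right_mem_segment ℝ x y))
    calc ‖f x‖ = dist (f x) (f z) := by
          rw [h0 z (hU.frontier_eq ▸ ⟨hzU, hz⟩), dist_zero_right]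
      _ ≤ K * dist x z := hf.dist_le_mul x z
      _ ≤ K * dist x y := by
          gcongr
          linarith [dist_add_dist_of_mem_segment hzxy, dist_nonneg (x := z) (y := y)]
  refine LipschitzWith.of_dist_le_mul fun x y => ?_
  by_cases hx : x ∈ U <;> by_cases hy : y ∈ U
  · simpa [hx, hy] using hf.dist_le_mul x y
  · simpa [hx, hy] using crossing x hx y hy
  · simpa [hx, hy, dist_comm x y] using crossing y hy x hx
  · simp only [indicator_of_notMem hx, indicator_of_notMem hy, dist_self]
    positivity

theorem image_eq_of_bijective_of_eqOn_compl {α β : Type*} {f g : α → β} {s : Set α}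
    (hf : f.Bijective) (hg : g.Bijective) (h : EqOn f g sᶜ) : f '' s = g '' s := by
  rw [← compl_inj_iff, ← image_compl_eq hf, ← image_compl_eq hg, h.image_eq]

theorem exists_polynomial_eval_eq_integral {α : Type*} [MeasurableSpace α] {μ : Measure α}
    {p : α → ℝ[X]} {N : ℕ} (hdeg : ∀ x, (p x).natDegree ≤ N)
    (hint : ∀ t, Integrable (fun x => (p x).eval t) μ) :
    ∃ P : ℝ[X], ∀ t, P.eval t = ∫ x, (p x).eval t ∂μ := by
  let s := Finset.range (N + 1)
  let v : ℕ → ℝ := (↑)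
  have interpolation : ∀ t x, (p x).eval t =
      ∑ i ∈ s, (p x).eval (v i) * (Lagrange.basis s v i).eval t := by
    intro t x
    have hlt : (p x).degree < s.card := by
      simpa [s] using degree_le_natDegree.trans_lt (by exact_mod_cast Nat.lt_succ_of_le (hdeg x))
    conv_lhs => rw [Lagrange.eq_interpolate Nat.cast_injective.injOn hlt]
    simp only [Lagrange.interpolate_apply, eval_finsetSum, eval_mul, eval_C, v]
  refine ⟨∑ i ∈ s, C (∫ x, (p x).eval (v i) ∂μ) * Lagrange.basis s v i, fun t => ?_⟩
  simp_rw [interpolation t, eval_finsetSum, eval_mul, eval_C]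
  rw [integral_finsetSum _ fun i _ => (hint (v i)).mul_const _]
  simp_rw [integral_mul_const]

theorem bijective_smul_add_of_lipschitzWith [CompleteSpace E] {f : E → E} {K : ℝ≥0}
    (hf : LipschitzWith K f) {c : ℝ} (hc : K < c) : (fun x => c • x + f x).Bijective := by
  have hc0 : 0 < c := K.coe_nonneg.trans_lt hc
  let cId : E ≃L[ℝ] E := ContinuousLinearEquiv.smulLeft (Units.mk0 c hc0.ne')
  have happrox : ApproximatesLinearOn (fun x => c • x + f x) (cId : E →L[ℝ] E) univ K := by
    intro x _ y _
    have : c • x + f x - (c • y + f y) - c • (x - y) = f x - f y := by module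
    simpa [cId, Units.smul_def, this] using hf.norm_sub_le x y
  have hK : Subsingleton E ∨ K < ‖(cId.symm : E →L[ℝ] E)‖₊⁻¹ := by
    refine (subsingleton_or_nontrivial E).imp_right fun (_ : Nontrivial E) => ?_
    have hnorm : ‖(cId.symm : E →L[ℝ] E)‖ ≤ c⁻¹ :=
      ContinuousLinearMap.opNorm_le_bound _ (by positivity) fun x => by
        change ‖c⁻¹ • x‖ ≤ _
        rw [norm_smul, Real.norm_of_nonneg (by positivity)]
    have hpos : 0 < ‖(cId.symm : E →L[ℝ] E)‖ := cId.symm.norm_pos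
    rw [← NNReal.coe_lt_coe, NNReal.coe_inv, coe_nnnorm]
    exact hc.trans_le (le_inv_of_le_inv₀ hpos hnorm)
  exact ⟨injOn_univ.1 (happrox.injOn hK), happrox.surjective hK⟩

variable [FiniteDimensional ℝ E]

theorem det_smul_id_add_pos_of_norm_lt {A : E →L[ℝ] E} {c : ℝ} (hA : ‖A‖ < c) :
    0 < (c • ContinuousLinearMap.id ℝ E + A).det := by
  have hc : 0 < c := (norm_nonneg A).trans_lt hA
  let γ : ℝ → ℝ := fun t => (c • ContinuousLinearMap.id ℝ E + t • A).det
  have hγ : Continuous γ := ContinuousLinearMap.continuous_det.comp (by fun_prop)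
  have hne : ∀ t ∈ Icc (0 : ℝ) 1, γ t ≠ 0 := by
    intro t ht h0
    have hlt : ‖t • A‖ < c := by
      rw [norm_smul, Real.norm_of_nonneg ht.1]
      exact (mul_le_of_le_one_left (norm_nonneg A) ht.2).trans_lt hA
    have hinj := (bijective_smul_add_of_lipschitzWith (t • A).lipschitz hlt).injective
    exact (LinearMap.bot_lt_ker_of_det_eq_zero h0).ne' (LinearMap.ker_eq_bot.2 hinj)
  have h0 : 0 < γ 0 := by
    simpa [γ, ContinuousLinearMap.det] using pow_pos hc _
  by_contra! h1
  obtain ⟨t, ht, ht0⟩ := intermediate_value_Icc' zero_le_one hγ.continuousOn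
    ⟨by simpa [γ] using h1, h0.le⟩
  exact hne t ht ht0

theorem det_add_smulRight_comp (A : E →L[ℝ] E) (ℓ : E →L[ℝ] ℝ) (v : E) :
    (A + (ℓ ∘L A).smulRight v).det = (1 + ℓ v) * A.det := by
  have hcomp : ((A + (ℓ ∘L A).smulRight v : E →L[ℝ] E) : E →ₗ[ℝ] E) =
      LinearMap.transvection (ℓ : E →ₗ[ℝ] ℝ) v ∘ₗ (A : E →ₗ[ℝ] E) := by
    ext x
    simp [LinearMap.transvection.apply]
  rw [ContinuousLinearMap.det, hcomp, LinearMap.det_comp, LinearMap.transvection.det]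
  rfl

theorem integrableOn_det_of_norm_le {α : Type*} [MeasurableSpace α] {μ : Measure α}
    {A : α → E →L[ℝ] E} (hA : Measurable A) {C : ℝ} (hC : ∀ x, ‖A x‖ ≤ C) {s : Set α}
    (hs : μ s ≠ ⊤) : IntegrableOn (fun x => (A x).det) s μ := by
  obtain ⟨M, hM⟩ := (isCompact_closedBall (0 : E →L[ℝ] E) C).exists_bound_of_continuousOn
    ContinuousLinearMap.continuous_det.continuousOn
  exact Measure.integrableOn_of_bounded hs
    (ContinuousLinearMap.continuous_det.measurable.comp hA).aestronglyMeasurable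
    (Filter.Eventually.of_forall fun x => hM _ (by simpa using hC x))

section Measure

variable [MeasurableSpace E] [BorelSpace E] {μ : Measure E}

theorem integrableOn_det_fderiv_of_lipschitzWith {f : E → E} {K : ℝ≥0} (hf : LipschitzWith K f)
    {s : Set E} (hs : μ s ≠ ⊤) : IntegrableOn (fun x => (fderiv ℝ f x).det) s μ :=
  integrableOn_det_of_norm_le (measurable_fderiv ℝ f)
    (fun _ => norm_fderiv_le_of_lipschitz ℝ hf) hs

theorem exists_polynomial_eval_eq_setIntegral_det {f : E → E} {K : ℝ≥0}
    (hf : LipschitzWith K f) {s : Set E} (hs : μ s ≠ ⊤) :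
    ∃ P : ℝ[X], ∀ c : ℝ,
      P.eval c = ∫ x in s, (c • ContinuousLinearMap.id ℝ E + fderiv ℝ f x).det ∂μ := by
  let p : E → ℝ[X] := fun x => (-(fderiv ℝ f x : E →ₗ[ℝ] E)).charpoly
  have hp : ∀ x c, (p x).eval c = (c • ContinuousLinearMap.id ℝ E + fderiv ℝ f x).det := by
    intro x c
    rw [LinearMap.eval_charpoly, sub_neg_eq_add]
    rfl
  simp_rw [← hp]
  refine exists_polynomial_eval_eq_integral (N := Module.finrank ℝ E)
    (fun x => (LinearMap.charpoly_natDegree _).le) fun c => ?_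
  simp_rw [hp]
  exact integrableOn_det_of_norm_le ((measurable_fderiv ℝ f).const_add _)
    (fun x => norm_add_le_of_le le_rfl (norm_fderiv_le_of_lipschitz ℝ hf)) hs

theorem hasDerivAt_setIntegral_comp_add_smul_mul_det_fderiv {f : E → E} {K : ℝ≥0}
    (hf : LipschitzWith K f) {s : Set E} (hs : μ s ≠ ⊤) {φ : E → ℝ}
    (hφ : ContDiff ℝ 1 φ) (hφc : HasCompactSupport φ) (v : E) (t : ℝ) :
    HasDerivAt (fun t : ℝ => ∫ x in s, φ (f x + t • v) * (fderiv ℝ f x).det ∂μ)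
      (∫ x in s, fderiv ℝ φ (f x + t • v) v * (fderiv ℝ f x).det ∂μ) t := by
  have hdet := integrableOn_det_fderiv_of_lipschitzWith hf hs
  have hdφ : Continuous (fderiv ℝ φ) := hφ.continuous_fderiv one_ne_zero
  obtain ⟨C, hC⟩ := hφ.continuous.bounded_above_of_compact_support hφc
  obtain ⟨C', hC'⟩ := hdφ.bounded_above_of_compact_support (hφc.fderiv ℝ)
  have hint : ∀ t : ℝ, IntegrableOn (fun x => φ (f x + t • v) * (fderiv ℝ f x).det) s μ :=
    fun t => hdet.bdd_mul (c := C) (hφ.continuous.comp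
      (hf.continuous.add continuous_const)).aestronglyMeasurable (.of_forall fun x => hC _)
  refine (hasDerivAt_integral_of_dominated_loc_of_deriv_le
    (F' := fun t x => fderiv ℝ φ (f x + t • v) v * (fderiv ℝ f x).det)
    (bound := fun x => C' * ‖v‖ * ‖(fderiv ℝ f x).det‖) Filter.univ_mem
    (.of_forall fun t => (hint t).aestronglyMeasurable) (hint t) ?_ (.of_forall fun x t _ => ?_)
    (hdet.norm.const_mul _) (.of_forall fun x t _ => ?_)).2
  · exact ((hdφ.comp (hf.continuous.add continuous_const)).clm_apply
      continuous_const).aestronglyMeasurable.mul hdet.aestronglyMeasurable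
  · rw [norm_mul]
    gcongr
    exact (fderiv ℝ φ _).le_of_opNorm_le (hC' _) v
  · have hline : HasDerivAt (fun t : ℝ => f x + t • v) v t := by
      simpa using ((hasDerivAt_id t).smul_const v).const_add (f x)
    exact ((hφ.differentiable one_ne_zero _).hasFDerivAt.comp_hasDerivAt t hline).mul_const _

theorem ae_det_fderiv_eq_zero_of_setIntegral_comp_mul_eq_zero {f g : E → E} {K : ℝ≥0}
    (hf : LipschitzWith K f) (hg : Measurable g) {s : Set E} (hs : MeasurableSet s)
    (hμs : μ s ≠ ⊤) (hgf : LeftInvOn g f s) {W : Set E} (hW : IsOpen W)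
    (hzero : ∀ φ : E → ℝ, ContDiff ℝ ∞ φ → HasCompactSupport φ → tsupport φ ⊆ W →
      ∫ x in s, φ (f x) * (fderiv ℝ f x).det ∂μ = 0) :
    ∀ᵐ x ∂μ.restrict s, f x ∈ W → (fderiv ℝ f x).det = 0 := by
  let w : E → ℝ := fun y => (fderiv ℝ f (g y)).det
  have hf' : AEMeasurable f (μ.restrict s) := hf.continuous.aemeasurable
  have hw : Measurable w := ContinuousLinearMap.continuous_det.measurable.comp
    ((measurable_fderiv ℝ f).comp hg)
  have hwf : EqOn (w ∘ f) (fun x => (fderiv ℝ f x).det) s := fun x hx => by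
    simp only [w, Function.comp_apply, hgf hx]
  have hwint : Integrable w ((μ.restrict s).map f) :=
    (integrable_map_measure hw.aestronglyMeasurable hf').2
      ((integrableOn_congr_fun hwf hs).2 (integrableOn_det_fderiv_of_lipschitzWith hf hμs))
  have hwW : ∀ᵐ y ∂(μ.restrict s).map f, y ∈ W → w y = 0 := by
    refine hW.ae_eq_zero_of_integral_contDiff_smul_eq_zero
      (hwint.locallyIntegrable.locallyIntegrableOn W) fun φ hφ hφc hφW => ?_
    rw [integral_map hf' (f := fun y => φ y • w y)
      (hφ.continuous.measurable.smul hw).aestronglyMeasurable, ← hzero φ hφ hφc hφW]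
    exact setIntegral_congr_fun hs fun x hx => congrArg (φ (f x) * ·) (hwf hx)
  filter_upwards [ae_of_ae_map hf' hwW, ae_restrict_mem hs] with x hx hxs hfx
  exact (hwf hxs).symm.trans (hx hfx)

variable [μ.IsAddHaarMeasure]

theorem addHaar_image_eq_zero_of_lipschitzWith {f : E → E} {K : ℝ≥0} (hf : LipschitzWith K f)
    {s : Set E} (hs : μ s = 0) : μ (f '' s) = 0 := by
  let ν : Measure E := μH[Module.finrank ℝ E]
  have hνs : ν s = 0 := Measure.absolutelyContinuous_isAddHaarMeasure ν μ hs
  have hνfs : ν (f '' s) = 0 := le_antisymm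
    ((hf.hausdorffMeasure_image_le (by positivity) s).trans_eq (by rw [hνs, mul_zero])) bot_le
  exact Measure.absolutelyContinuous_isAddHaarMeasure μ ν hνfs

theorem lintegral_abs_det_fderiv_eq_addHaar_image_of_lipschitzWith {f : E → E} {K : ℝ≥0}
    (hf : LipschitzWith K f) {s : Set E} (hs : MeasurableSet s) (hinj : InjOn f s) :
    ∫⁻ x in s, ENNReal.ofReal |(fderiv ℝ f x).det| ∂μ = μ (f '' s) := by
  let D : Set E := {x | DifferentiableAt ℝ f x}
  have hD : MeasurableSet D := measurableSet_of_differentiableAt ℝ f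
  have hDc : μ Dᶜ = 0 := ae_iff.1 hf.ae_differentiableAt
  have hsD : μ (s \ D) = 0 := measure_mono_null (fun _ hx => hx.2) hDc
  calc ∫⁻ x in s, ENNReal.ofReal |(fderiv ℝ f x).det| ∂μ
      = ∫⁻ x in s ∩ D, ENNReal.ofReal |(fderiv ℝ f x).det| ∂μ := by
        rw [← lintegral_inter_add_sdiff _ s hD, setLIntegral_measure_zero _ _ hsD, add_zero]
    _ = μ (f '' (s ∩ D)) := lintegral_abs_det_fderiv_eq_addHaar_image μ (hs.inter hD)
        (fun _ hx => hx.2.hasFDerivAt.hasFDerivWithinAt) (hinj.mono inter_subset_left)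
    _ = μ (f '' s) := by
        conv_rhs => rw [← inter_union_sdiff s D, image_union]
        exact (measure_congr (union_ae_eq_left_of_ae_eq_empty
          (ae_eq_empty.2 (addHaar_image_eq_zero_of_lipschitzWith hf hsD)))).symm

theorem setIntegral_det_smul_id_add_fderiv_eq_measureReal_image {f : E → E} {K : ℝ≥0}
    (hf : LipschitzWith K f) {c : ℝ} (hc : K < c) {s : Set E} (hs : MeasurableSet s) :
    ∫ x in s, (c • ContinuousLinearMap.id ℝ E + fderiv ℝ f x).det ∂μ =
      μ.real ((fun x => c • x + f x) '' s) := by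
  have hpos : ∀ x, 0 < (c • ContinuousLinearMap.id ℝ E + fderiv ℝ f x).det := fun x =>
    det_smul_id_add_pos_of_norm_lt ((norm_fderiv_le_of_lipschitz ℝ hf).trans_lt hc)
  have hfderiv : ∀ᵐ x ∂μ.restrict s,
      fderiv ℝ (fun x => c • x + f x) x = c • ContinuousLinearMap.id ℝ E + fderiv ℝ f x := by
    filter_upwards [ae_restrict_of_ae hf.ae_differentiableAt] with x hx
    exact (((hasFDerivAt_id x).const_smul c).add hx.hasFDerivAt).fderiv
  have hmeas : Measurable fun x => (c • ContinuousLinearMap.id ℝ E + fderiv ℝ f x).det :=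
    ContinuousLinearMap.continuous_det.measurable.comp ((measurable_fderiv ℝ f).const_add _)
  rw [integral_eq_lintegral_of_nonneg_ae (.of_forall fun x => (hpos x).le)
    hmeas.aestronglyMeasurable, measureReal_def,
    ← lintegral_abs_det_fderiv_eq_addHaar_image_of_lipschitzWith
      ((lipschitzWith_smul c).add hf) hs
      (bijective_smul_add_of_lipschitzWith hf hc).injective.injOn]
  congr 1
  refine lintegral_congr_ae ?_
  filter_upwards [hfderiv] with x hx
  rw [hx, abs_of_pos (hpos x)]

theorem setIntegral_det_fderiv_eq_of_eqOn_compl {f g : E → E} {K L : ℝ≥0} (hf : LipschitzWith K f)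
    (hg : LipschitzWith L g) {s : Set E} (hs : MeasurableSet s) (hμs : μ s ≠ ⊤)
    (hfg : EqOn f g sᶜ) :
    ∫ x in s, (fderiv ℝ f x).det ∂μ = ∫ x in s, (fderiv ℝ g x).det ∂μ := by
  obtain ⟨P, hP⟩ := exists_polynomial_eval_eq_setIntegral_det hf hμs
  obtain ⟨Q, hQ⟩ := exists_polynomial_eval_eq_setIntegral_det hg hμs
  have hlarge : ∀ c ∈ Ioi (max K L : ℝ), P.eval c = Q.eval c := by
    intro c hc
    obtain ⟨hKc, hLc⟩ := max_lt_iff.1 (mem_Ioi.1 hc)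
    rw [hP, hQ, setIntegral_det_smul_id_add_fderiv_eq_measureReal_image hf hKc hs,
      setIntegral_det_smul_id_add_fderiv_eq_measureReal_image hg hLc hs,
      image_eq_of_bijective_of_eqOn_compl (bijective_smul_add_of_lipschitzWith hf hKc)
        (bijective_smul_add_of_lipschitzWith hg hLc) fun x hx => by simp only [hfg hx]]
  have hPQ : P = Q := eq_of_infinite_eval_eq P Q ((Ioi_infinite _).mono hlarge)
  simpa [hPQ, hQ] using (hP 0).symm

theorem setIntegral_fderiv_mul_det_fderiv_eq_zero {f : E → E} {K : ℝ≥0} (hf : LipschitzWith K f)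
    {U : Set E} (hU : IsOpen U) (hμU : μ U ≠ ⊤) {η : E → ℝ} {L : ℝ≥0} (hη : LipschitzWith L η)
    (hη' : Differentiable ℝ η) (h0 : ∀ x ∈ frontier U, η (f x) = 0) (v : E) :
    ∫ x in U, fderiv ℝ η (f x) v * (fderiv ℝ f x).det ∂μ = 0 := by
  let h : E → E := U.indicator fun x => η (f x) • v
  obtain ⟨M, hM⟩ : ∃ M, LipschitzWith M h := by
    have hsmul : LipschitzWith _ fun x => η (f x) • v :=
      (ContinuousLinearMap.toSpanSingleton ℝ v).lipschitz.comp (hη.comp hf)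
    exact ⟨_, lipschitzWith_indicator_of_eq_zero_on_frontier hsmul hU fun x hx => by simp [h0 x hx]⟩
  have hfh : LipschitzWith (K + M) fun x => f x + h x := hf.add hM
  have hdet : ∀ᵐ x ∂μ.restrict U, fderiv ℝ η (f x) v * (fderiv ℝ f x).det =
      (fderiv ℝ (fun x => f x + h x) x).det - (fderiv ℝ f x).det := by
    filter_upwards [ae_restrict_of_ae hf.ae_differentiableAt, ae_restrict_mem hU.measurableSet]
      with x hx hxU
    have hnear : (fun x => f x + h x) =ᶠ[𝓝 x] fun x => f x + η (f x) • v := by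
      filter_upwards [hU.mem_nhds hxU] with y hy
      simp only [h, indicator_of_mem hy]
    have hderiv : HasFDerivAt (fun y => f y + η (f y) • v)
        (fderiv ℝ f x + (fderiv ℝ η (f x) ∘L fderiv ℝ f x).smulRight v) x :=
      hx.hasFDerivAt.add (((hη' (f x)).hasFDerivAt.comp x hx.hasFDerivAt).smul_const v)
    rw [hnear.fderiv_eq, hderiv.fderiv, det_add_smulRight_comp]
    ring
  rw [integral_congr_ae hdet, integral_sub (integrableOn_det_fderiv_of_lipschitzWith hfh hμU)
    (integrableOn_det_fderiv_of_lipschitzWith hf hμU), sub_eq_zero]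
  refine setIntegral_det_fderiv_eq_of_eqOn_compl hfh hf hU.measurableSet hμU fun x hx => ?_
  simp only [h, indicator_of_notMem hx, add_zero]

theorem setIntegral_comp_mul_det_fderiv_eq_of_translate {f : E → E} {K : ℝ≥0}
    (hf : LipschitzWith K f) {U : Set E} (hU : IsOpen U) (hμU : μ U ≠ ⊤) {φ : E → ℝ}
    (hφ : ContDiff ℝ 1 φ) (hφc : HasCompactSupport φ) {v : E}
    (h0 : ∀ t ∈ Icc (0 : ℝ) 1, ∀ x ∈ frontier U, φ (f x + t • v) = 0) :
    ∫ x in U, φ (f x) * (fderiv ℝ f x).det ∂μ =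
      ∫ x in U, φ (f x + v) * (fderiv ℝ f x).det ∂μ := by
  let J : ℝ → ℝ := fun t => ∫ x in U, φ (f x + t • v) * (fderiv ℝ f x).det ∂μ
  obtain ⟨L, hL⟩ := hφ.lipschitzWith_of_hasCompactSupport hφc one_ne_zero
  have hJ : ∀ t ∈ Icc (0 : ℝ) 1, HasDerivAt J 0 t := by
    intro t ht
    have hzero := setIntegral_fderiv_mul_det_fderiv_eq_zero hf hU hμU
      (hL.comp ((LipschitzWith.id).add (LipschitzWith.const (t • v))))
      ((hφ.differentiable one_ne_zero).comp (differentiable_id.add_const (t • v))) (h0 t ht) v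
    simp only [Function.comp_def, id, fderiv_comp_add_right] at hzero
    exact hzero ▸ hasDerivAt_setIntegral_comp_add_smul_mul_det_fderiv hf hμU hφ hφc v t
  have hconst : J 1 = J 0 := constant_of_has_deriv_right_zero
    (fun t ht => (hJ t ht).continuousAt.continuousWithinAt)
    (fun t ht => (hJ t (Ico_subset_Icc_self ht)).hasDerivWithinAt) 1 (right_mem_Icc.2 zero_le_one)
  simpa [J] using hconst.symm

theorem setIntegral_comp_mul_det_fderiv_eq_zero {f : E → E} {K : ℝ≥0} (hf : LipschitzWith K f)
    {U : Set E} (hU : IsOpen U) (hμU : μ U ≠ ⊤) {φ : E → ℝ} (hφ : ContDiff ℝ 1 φ)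
    (hφc : HasCompactSupport φ) {a c : E} {δ : ℝ} (hφδ : tsupport φ ⊆ ball a δ)
    (hcU : Disjoint (ball c δ) (f '' U))
    (haU : Disjoint (ball a (dist c a + δ)) (f '' frontier U)) :
    ∫ x in U, φ (f x) * (fderiv ℝ f x).det ∂μ = 0 := by
  have hφ0 : ∀ y, δ ≤ dist y a → φ y = 0 := fun y hy =>
    image_eq_zero_of_notMem_tsupport fun hyφ => (hφδ hyφ).not_ge hy
  have hfrontier : ∀ t ∈ Icc (0 : ℝ) 1, ∀ z ∈ frontier U, φ (f z + t • (a - c)) = 0 := by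
    intro t ht z hz
    have hfar : dist c a + δ ≤ dist (f z) a :=
      not_lt.1 fun h => haU.notMem_of_mem_left h (mem_image_of_mem f hz)
    have hshift : ‖t • (a - c)‖ ≤ dist c a := by
      rw [norm_smul, Real.norm_of_nonneg ht.1, dist_eq_norm']
      exact mul_le_of_le_one_left (norm_nonneg _) ht.2
    have htri := dist_triangle_left (f z) a (f z + t • (a - c))
    rw [dist_self_add_left] at htri
    exact hφ0 _ (by linarith)
  rw [setIntegral_comp_mul_det_fderiv_eq_of_translate hf hU hμU hφ hφc hfrontier]
  refine setIntegral_eq_zero_of_forall_eq_zero fun z hz => ?_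
  have hfar : δ ≤ dist (f z) c :=
    not_lt.1 fun h => hcU.notMem_of_mem_left h (mem_image_of_mem f hz)
  have hdist : dist (f z + (a - c)) a = dist (f z) c := by
    rw [dist_eq_norm, dist_eq_norm, add_sub_right_comm, sub_add_sub_cancel]
  rw [hφ0 _ (hfar.trans_eq hdist.symm), zero_mul]

theorem measure_eq_zero_of_ae_det_fderiv_eq_zero {f g : E → E} {K L : ℝ≥0}
    (hf : LipschitzWith K f) (hg : LipschitzWith L g) {s : Set E} (hs : MeasurableSet s)
    (hgf : LeftInvOn g f s) (hdet : ∀ᵐ x ∂μ.restrict s, (fderiv ℝ f x).det = 0) : μ s = 0 := by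
  have himage : μ (f '' s) = 0 := by
    rw [← lintegral_abs_det_fderiv_eq_addHaar_image_of_lipschitzWith hf hs hgf.injOn]
    refine lintegral_eq_zero_of_ae_eq_zero ?_
    filter_upwards [hdet] with x hx
    simp only [hx, abs_zero, ENNReal.ofReal_zero, Pi.zero_apply]
  exact hgf.image_image ▸ addHaar_image_eq_zero_of_lipschitzWith hg himage

theorem exists_setIntegral_comp_mul_det_fderiv_ne_zero {f g : E → E} {K L : ℝ≥0}
    (hf : LipschitzWith K f) (hg : LipschitzWith L g) {U : Set E} (hU : IsOpen U)
    (hμU : μ U ≠ ⊤) (hgf : LeftInvOn g f U) {W : Set E} (hW : IsOpen W)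
    (hUW : (U ∩ f ⁻¹' W).Nonempty) :
    ∃ φ : E → ℝ, ContDiff ℝ 1 φ ∧ HasCompactSupport φ ∧ tsupport φ ⊆ W ∧
      ∫ x in U, φ (f x) * (fderiv ℝ f x).det ∂μ ≠ 0 := by
  by_contra! hzero
  have hdet := ae_det_fderiv_eq_zero_of_setIntegral_comp_mul_eq_zero hf
    hg.continuous.measurable hU.measurableSet hμU hgf hW
    fun φ hφ hφc => hzero φ (hφ.of_le (mod_cast le_top)) hφc
  have hopen : IsOpen (U ∩ f ⁻¹' W) := hU.inter (hW.preimage hf.continuous)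
  refine (hopen.measure_pos μ hUW).ne' (measure_eq_zero_of_ae_det_fderiv_eq_zero hf hg
    hopen.measurableSet (hgf.mono inter_subset_left) ?_)
  rw [ae_restrict_iff' hU.measurableSet] at hdet
  rw [ae_restrict_iff' hopen.measurableSet]
  filter_upwards [hdet] with x hx hxUW using hx hxUW.1 hxUW.2

end Measure

theorem ball_subset_image_closure {f g : E → E} {K L : ℝ≥0} (hf : LipschitzWith K f)
    (hg : LipschitzWith L g) {U : Set E} (hU : IsOpen U) (hUb : Bornology.IsBounded U)
    (hgf : LeftInvOn g f U) {x : E} (hx : x ∈ U) {r : ℝ}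
    (hr : Disjoint (ball (f x) r) (f '' frontier U)) : ball (f x) r ⊆ f '' closure U := by
  borelize E
  intro c hc
  by_contra hcU
  have hclosed : IsClosed (f '' closure U) :=
    (hUb.isCompact_closure.image hf.continuous).isClosed
  obtain ⟨ε, hε, hεU⟩ := Metric.isOpen_iff.1 hclosed.isOpen_compl c hcU
  let δ : ℝ := min ε (r - dist c (f x))
  have hδ : 0 < δ := lt_min hε (sub_pos.2 hc)
  have hδU : Disjoint (ball c δ) (f '' U) :=
    disjoint_left.2 fun y hy hyU => hεU (ball_subset_ball (min_le_left _ _) hy)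
      (image_mono subset_closure hyU)
  have hδr : dist c (f x) + δ ≤ r := by linarith [min_le_right ε (r - dist c (f x))]
  have hvolume : (Measure.addHaar : Measure E) U ≠ ⊤ := hUb.measure_lt_top.ne
  obtain ⟨φ, hφ, hφc, hφδ, hne⟩ := exists_setIntegral_comp_mul_det_fderiv_ne_zero hf hg hU
    hvolume hgf (isOpen_ball (x := f x) (ε := δ)) ⟨x, hx, mem_ball_self hδ⟩
  exact hne (setIntegral_comp_mul_det_fderiv_eq_zero hf hU hvolume hφ hφc hφδ hδU
    (hr.mono_left (ball_subset_ball hδr)))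

theorem image_mem_nhds_of_lipschitzWith_leftInvOn {f g : E → E} {K L : ℝ≥0}
    (hf : LipschitzWith K f) (hg : LipschitzWith L g) {s : Set E} {x : E} (hs : s ∈ 𝓝 x)
    (hgf : LeftInvOn g f s) : f '' s ∈ 𝓝 (f x) := by
  obtain ⟨R, hR, hRs⟩ := nhds_basis_closedBall.mem_iff.1 hs
  have hclosure : closure (ball x R) ⊆ s := closure_ball_subset_closedBall.trans hRs
  have hx : x ∈ ball x R := mem_ball_self hR
  have hfrontier : IsCompact (frontier (ball x R)) :=
    isBounded_ball.isCompact_closure.of_isClosed_subset isClosed_frontier frontier_subset_closure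
  have hfx : f x ∉ f '' frontier (ball x R) := by
    rintro ⟨z, hz, hzx⟩
    have hzx' : z = x := hgf.injOn (hclosure (frontier_subset_closure hz)) (mem_of_mem_nhds hs) hzx
    rw [isOpen_ball.frontier_eq] at hz
    exact hz.2 (hzx' ▸ hx)
  obtain ⟨r, hr, hrU⟩ := Metric.isOpen_iff.1
    (hfrontier.image hf.continuous).isClosed.isOpen_compl (f x) hfx
  exact Filter.mem_of_superset (ball_mem_nhds _ hr)
    ((ball_subset_image_closure hf hg isOpen_ball isBounded_ball
      (hgf.mono (subset_closure.trans hclosure)) hx (disjoint_left.2 hrU)).trans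
      (image_mono hclosure))

end Degree

section BiLipschitz

variable {E F : Type*} [NormedAddCommGroup E] [NormedAddCommGroup F]

theorem lipschitzOnWith_image_of_leftInvOn {f : E → F} {g : F → E} {s : Set E} {c : ℝ}
    (hc : 0 < c) (hf : ∀ y ∈ s, ∀ z ∈ s, c * ‖y - z‖ ≤ ‖f y - f z‖) (hgf : LeftInvOn g f s) :
    LipschitzOnWith c⁻¹.toNNReal g (f '' s) := by
  refine LipschitzOnWith.of_dist_le' ?_
  rintro _ ⟨y, hy, rfl⟩ _ ⟨z, hz, rfl⟩
  rw [hgf hy, hgf hz, dist_eq_norm, dist_eq_norm, inv_mul_eq_div, le_div_iff₀' hc]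
  exact hf y hy z hz

variable [NormedSpace ℝ E] [FiniteDimensional ℝ E]

theorem image_mem_nhds_of_lipschitzOnWith_leftInvOn {f g : E → E} {K L : ℝ≥0} {s : Set E} {x : E}
    (hs : s ∈ 𝓝 x) (hf : LipschitzOnWith K f s) (hg : LipschitzOnWith L g (f '' s))
    (hgf : LeftInvOn g f s) : f '' s ∈ 𝓝 (f x) := by
  obtain ⟨f', hf', hff'⟩ := hf.extend_finite_dimension
  obtain ⟨g', hg', hgg'⟩ := hg.extend_finite_dimension
  have hgf' : LeftInvOn g' f' s := fun y hy => by
    rw [← hff' hy, ← hgg' (mem_image_of_mem f hy), hgf hy]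
  rw [hff'.image_eq, hff' (mem_of_mem_nhds hs)]
  exact image_mem_nhds_of_lipschitzWith_leftInvOn hf' hg' hs hgf'

theorem injective_lipschitz_immersion_open_image_general {B : Set E} {κ : E → E}
    (hinj : InjOn κ B)
    (himm : ∀ x ∈ B, ∃ U ∈ 𝓝 x, U ⊆ B ∧ ∃ c d : ℝ, 0 < c ∧
      ∀ y ∈ U, ∀ z ∈ U, c * ‖y - z‖ ≤ ‖κ y - κ z‖ ∧ ‖κ y - κ z‖ ≤ d * ‖y - z‖) :
    IsOpen (κ '' B) ∧ ContinuousOn κ B ∧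
    ∃ ψ : E → E, (∀ x ∈ B, ψ (κ x) = x) ∧ ContinuousOn ψ (κ '' B) ∧
      ∀ y ∈ κ '' B, ∃ V ∈ 𝓝 y, V ⊆ κ '' B ∧ ∃ C : ℝ≥0, LipschitzOnWith C ψ V := by
  let ψ : E → E := Function.invFunOn κ B
  have hψ : LeftInvOn ψ κ B := hinj.leftInvOn_invFunOn
  have hlocal : ∀ x ∈ B, ∃ U ∈ 𝓝 x, U ⊆ B ∧ ∃ K L : ℝ≥0,
      LipschitzOnWith K κ U ∧ LipschitzOnWith L ψ (κ '' U) := by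
    intro x hx
    obtain ⟨U, hU, hUB, c, d, hc, h⟩ := himm x hx
    refine ⟨U, hU, hUB, d.toNNReal, c⁻¹.toNNReal, LipschitzOnWith.of_dist_le' fun y hy z hz => ?_,
      lipschitzOnWith_image_of_leftInvOn hc (fun y hy z hz => (h y hy z hz).1) (hψ.mono hUB)⟩
    simpa only [dist_eq_norm] using (h y hy z hz).2
  have hinverse : ∀ y ∈ κ '' B, ∃ V ∈ 𝓝 y, V ⊆ κ '' B ∧ ∃ C : ℝ≥0, LipschitzOnWith C ψ V := by
    rintro _ ⟨x, hx, rfl⟩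
    obtain ⟨U, hU, hUB, K, L, hκ, hL⟩ := hlocal x hx
    exact ⟨κ '' U, image_mem_nhds_of_lipschitzOnWith_leftInvOn hU hκ hL (hψ.mono hUB),
      image_mono hUB, L, hL⟩
  refine ⟨isOpen_iff_mem_nhds.2 fun y hy => ?_, fun x hx => ?_, ψ, hψ, fun y hy => ?_, hinverse⟩
  · obtain ⟨V, hV, hVB, -⟩ := hinverse y hy
    exact Filter.mem_of_superset hV hVB
  · obtain ⟨U, hU, -, K, -, hκ, -⟩ := hlocal x hx
    exact (hκ.continuousOn.continuousAt hU).continuousWithinAt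
  · obtain ⟨V, hV, -, C, hC⟩ := hinverse y hy
    exact (hC.continuousOn.continuousAt hV).continuousWithinAt

end BiLipschitz

/-- **Invariance of domain for injective Lipschitz immersions.**
If `B ⊆ ℝⁿ` is open and `κ : B → ℝⁿ` is injective and a Lipschitz immersion (every point
has a neighborhood on which `κ` is bi-Lipschitz), then `κ(B)` is open, `κ` is a
homeomorphism of `B` onto `κ(B)`, and the inverse map is locally Lipschitz on `κ(B)`. -/
theorem injective_lipschitz_immersion_open_image
    (n : ℕ) (B : Set (EuclideanSpace ℝ (Fin n))) (hB : IsOpen B)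
    (κ : EuclideanSpace ℝ (Fin n) → EuclideanSpace ℝ (Fin n))
    (hinj : Set.InjOn κ B)
    (himm : ∀ x ∈ B, ∃ U ∈ 𝓝 x, U ⊆ B ∧ ∃ c d : ℝ, 0 < c ∧ c ≤ d ∧
      ∀ y ∈ U, ∀ z ∈ U, c * ‖y - z‖ ≤ ‖κ y - κ z‖ ∧ ‖κ y - κ z‖ ≤ d * ‖y - z‖) :
    IsOpen (κ '' B) ∧ ContinuousOn κ B ∧
    ∃ ψ : EuclideanSpace ℝ (Fin n) → EuclideanSpace ℝ (Fin n),
      (∀ x ∈ B, ψ (κ x) = x) ∧ ContinuousOn ψ (κ '' B) ∧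
      ∀ y ∈ κ '' B, ∃ V ∈ 𝓝 y, V ⊆ κ '' B ∧ ∃ C : ℝ≥0, LipschitzOnWith C ψ V :=
  injective_lipschitz_immersion_open_image_general hinj fun x hx =>
    let ⟨U, hU, hUB, c, d, hc, _, hcd⟩ := himm x hx
    ⟨U, hU, hUB, c, d, hc, hcd⟩
end

section
/- Let φ : ℝⁿ → ℝⁿ be a bijection which is L-bi-Lipschitz, i.e. (1/L)|x−y| ≤ |φ(x)−φ(y)| ≤ L|x−y| for all x, y. Then for every Borel set U ⊆ ℝⁿ and every x ∈ ℝⁿ: the density d(x,U) exists and equals 0 if and only if d(φ(x), φ(U)) exists and equals 0, and d(x,U) exists and equals 1 if and only if d(φ(x), φ(U)) exists and equals 1. Consequently the essential boundary transforms naturally: ∂*(φ(U)) = φ(∂*U). -/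
/-!
Lebesgue measure is a multiple of Hausdorff measure, so a `K`-Lipschitz map multiplies it by at most
`Kⁿ`. If `f` is also `K'`-antilipschitz, then `f(U) ∩ B(f x, r) ⊆ f(U ∩ B(x, K' r))`. Hence the
density ratio of `f(U)` at `f x` and scale `r` is at most `(K K')ⁿ` times that of `U` at `x` and
scale `K' r`, and density `0` is carried forward.

Density `1` of a measurable set is density `0` of its complement. An arbitrary set has the same
density ratios as its measurable hull, and this is still so after taking images under a measurable
map that preserves null sets, so density `1` is carried forward too. The inverse of `f` gives the
converse implications.
-/

open MeasureTheory Metric Set Filter Topology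
open scoped ENNReal

/-- The set `U` has density `d` at the point `x`:  the ratio
`Lⁿ(U ∩ B(x,r)) / Lⁿ(B(x,r))` tends to `d` as `r → 0⁺`. -/
def HasDensity {n : ℕ} (U : Set (EuclideanSpace ℝ (Fin n)))
    (x : EuclideanSpace ℝ (Fin n)) (d : ℝ≥0∞) : Prop :=
  Tendsto (fun r : ℝ => volume (U ∩ ball x r) / volume (ball x r)) (𝓝[>] 0) (𝓝 d)

/-- The essential (measure-theoretic) boundary of `U`: the set of points `x` where the
density of `U` neither (exists and equals `0`) nor (exists and equals `1`). -/
def essentialBoundary {n : ℕ} (U : Set (EuclideanSpace ℝ (Fin n))) :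
    Set (EuclideanSpace ℝ (Fin n)) :=
  {x | ¬ HasDensity U x 0 ∧ ¬ HasDensity U x 1}

open Function Module
open scoped NNReal

lemma measure_image_toMeasurable_inter {α β : Type*} [MeasurableSpace α] [MeasurableSpace β]
    {μ : Measure α} [SFinite μ] {ν : Measure β} {f : α → β} (hf : Measurable f)
    (hnull : ∀ s, μ s = 0 → ν (f '' s) = 0) (U : Set α) {t : Set β} (ht : MeasurableSet t) :
    ν (f '' toMeasurable μ U ∩ t) = ν (f '' U ∩ t) := by
  refine le_antisymm ?_ (by gcongr; exact subset_toMeasurable μ U)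
  set W := toMeasurable ν (f '' U ∩ t)
  have hWt : MeasurableSet (f ⁻¹' (t \ W)) :=
    hf (ht.diff (measurableSet_toMeasurable _ _))
  have hdisj : U ∩ f ⁻¹' (t \ W) = ∅ := by
    rw [eq_empty_iff_forall_notMem]
    rintro y ⟨hyU, hyt, hyW⟩
    exact hyW (subset_toMeasurable ν _ ⟨mem_image_of_mem f hyU, hyt⟩)
  have hexcess : ν (f '' (toMeasurable μ U ∩ f ⁻¹' (t \ W))) = 0 := hnull _ <| by
    rw [Measure.measure_toMeasurable_inter_of_sFinite hWt, hdisj, measure_empty]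
  calc ν (f '' toMeasurable μ U ∩ t)
      ≤ ν (W ∪ f '' (toMeasurable μ U ∩ f ⁻¹' (t \ W))) := by
        rw [image_inter_preimage]
        exact measure_mono fun y hy => or_iff_not_imp_left.2 fun hyW => ⟨hy.1, hy.2, hyW⟩
    _ ≤ ν W + 0 := hexcess ▸ measure_union_le _ _
    _ = ν (f '' U ∩ t) := by rw [add_zero, measure_toMeasurable]

lemma image_inter_ball_subset_of_antilipschitzWith {X Y : Type*} [PseudoMetricSpace X]
    [PseudoMetricSpace Y] {K : ℝ≥0} {f : X → Y} (hf : AntilipschitzWith K f) (hK : 0 < K)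
    (U : Set X) (x : X) (r : ℝ) : f '' U ∩ ball (f x) r ⊆ f '' (U ∩ ball x (K * r)) := by
  rintro _ ⟨⟨y, hyU, rfl⟩, hyr⟩
  refine mem_image_of_mem f ⟨hyU, ?_⟩
  calc dist y x ≤ K * dist (f y) (f x) := hf.le_mul_dist y x
    _ < K * r := mul_lt_mul_of_pos_left hyr (NNReal.coe_pos.2 hK)

section AddHaar

variable {E : Type*} [NormedAddCommGroup E] [NormedSpace ℝ E] [FiniteDimensional ℝ E]
  [MeasurableSpace E] [BorelSpace E] (μ : Measure E) [μ.IsAddHaarMeasure] {K K' : ℝ≥0} {f : E → E}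

lemma addHaar_image_le_of_lipschitzOnWith {s : Set E} (hf : LipschitzOnWith K f s) :
    μ (f '' s) ≤ K ^ finrank ℝ E * μ s := by
  obtain ⟨c, hc⟩ : ∃ c : ℝ≥0, μ = c • Measure.hausdorffMeasure (finrank ℝ E : ℝ) :=
    ⟨_, Measure.isAddLeftInvariant_eq_smul _ _⟩
  have hle := hf.hausdorffMeasure_image_le (Nat.cast_nonneg (finrank ℝ E))
  rw [ENNReal.rpow_natCast] at hle
  simp only [hc, Measure.smul_apply, ENNReal.smul_def, smul_eq_mul, mul_left_comm _ (c : ℝ≥0∞)]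
  gcongr

lemma addHaar_ball_nnreal_mul (hK : 0 < K) (x y : E) (r : ℝ) :
    μ (ball x (K * r)) = K ^ finrank ℝ E * μ (ball y r) := by
  rw [Measure.addHaar_ball_mul_of_pos μ x (NNReal.coe_pos.2 hK), ← Measure.addHaar_ball_center μ y,
    ENNReal.ofReal_pow K.coe_nonneg, ENNReal.ofReal_coe_nnreal]

lemma addHaar_image_inter_ball_div_le (hf : LipschitzWith K f) (hf' : AntilipschitzWith K' f)
    (hK' : 0 < K') (U : Set E) (x : E) (r : ℝ) :
    μ (f '' U ∩ ball (f x) r) / μ (ball (f x) r) ≤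
      (K * K') ^ finrank ℝ E * (μ (U ∩ ball x (K' * r)) / μ (ball x (K' * r))) := by
  have hK'_ne_zero : (K' : ℝ≥0∞) ^ finrank ℝ E ≠ 0 := by positivity
  have hK'_ne_top : (K' : ℝ≥0∞) ^ finrank ℝ E ≠ ∞ := by finiteness
  calc μ (f '' U ∩ ball (f x) r) / μ (ball (f x) r)
      ≤ K ^ finrank ℝ E * μ (U ∩ ball x (K' * r)) / μ (ball (f x) r) := by
        gcongr
        exact (measure_mono (image_inter_ball_subset_of_antilipschitzWith hf' hK' U x r)).trans
          (addHaar_image_le_of_lipschitzOnWith μ hf.lipschitzOnWith)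
    _ = (K * K') ^ finrank ℝ E * (μ (U ∩ ball x (K' * r)) / μ (ball x (K' * r))) := by
        rw [addHaar_ball_nnreal_mul μ hK' x (f x), mul_pow, mul_assoc, ← mul_div_assoc _ (μ _),
          ENNReal.mul_div_mul_left _ _ hK'_ne_zero hK'_ne_top, mul_div_assoc]

end AddHaar

section Density

variable {n : ℕ} {K K' : ℝ≥0} {f : EuclideanSpace ℝ (Fin n) → EuclideanSpace ℝ (Fin n)}
  {U V : Set (EuclideanSpace ℝ (Fin n))} {x : EuclideanSpace ℝ (Fin n)}

lemma hasDensity_congr {d : ℝ≥0∞} (h : ∀ r, volume (U ∩ ball x r) = volume (V ∩ ball x r)) :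
    HasDensity U x d ↔ HasDensity V x d := by
  simp only [HasDensity, h]

lemma hasDensity_toMeasurable_iff {d : ℝ≥0∞} :
    HasDensity (toMeasurable volume U) x d ↔ HasDensity U x d :=
  hasDensity_congr fun _ => Measure.measure_toMeasurable_inter_of_sFinite measurableSet_ball U

lemma hasDensity_image_toMeasurable_iff {d : ℝ≥0∞} (hf : LipschitzWith K f) :
    HasDensity (f '' toMeasurable volume U) x d ↔ HasDensity (f '' U) x d := by
  have hnull : ∀ s, volume s = 0 → volume (f '' s) = 0 := fun s hs => by
    simpa only [hs, mul_zero, nonpos_iff_eq_zero] using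
      addHaar_image_le_of_lipschitzOnWith volume (s := s) hf.lipschitzOnWith
  exact hasDensity_congr fun _ =>
    measure_image_toMeasurable_inter hf.continuous.measurable hnull U measurableSet_ball

lemma HasDensity.compl_zero (hU : NullMeasurableSet U) (h : HasDensity U x 1) :
    HasDensity Uᶜ x 0 := by
  have hlim := ENNReal.Tendsto.sub tendsto_const_nhds h (Or.inl ENNReal.one_ne_top)
  rw [tsub_self] at hlim
  refine hlim.congr' ?_
  filter_upwards [self_mem_nhdsWithin] with r hr
  have hball : volume (ball x r) ≠ 0 := (measure_ball_pos volume x hr).ne'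
  have hsum : 1 = volume (U ∩ ball x r) / volume (ball x r) +
      volume (Uᶜ ∩ ball x r) / volume (ball x r) := by
    rw [← ENNReal.add_div, inter_comm U, inter_comm Uᶜ, ← sdiff_eq, measure_inter_add_sdiff₀ _ hU,
      ENNReal.div_self hball measure_ball_lt_top.ne]
  exact ENNReal.sub_eq_of_eq_add_rev
    (ENNReal.div_ne_top (measure_ne_top_of_subset inter_subset_right measure_ball_lt_top.ne) hball)
    hsum

lemma HasDensity.one_of_compl_zero (h : HasDensity Uᶜ x 0) : HasDensity U x 1 := by
  have hlim := ENNReal.Tendsto.sub tendsto_const_nhds h (Or.inl ENNReal.one_ne_top)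
  rw [tsub_zero] at hlim
  refine tendsto_of_tendsto_of_tendsto_of_le_of_le' hlim tendsto_const_nhds ?_
    (Eventually.of_forall fun r => ENNReal.div_le_of_le_mul ?_)
  · filter_upwards [self_mem_nhdsWithin] with r hr
    rw [tsub_le_iff_right, ← ENNReal.add_div,
      ← ENNReal.div_self (measure_ball_pos volume x hr).ne' measure_ball_lt_top.ne]
    gcongr
    calc volume (ball x r) = volume (U ∩ ball x r ∪ Uᶜ ∩ ball x r) := by
          rw [← union_inter_distrib_right, union_compl_self, univ_inter]
      _ ≤ volume (U ∩ ball x r) + volume (Uᶜ ∩ ball x r) := measure_union_le _ _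
  · rw [one_mul]
    exact measure_mono inter_subset_right

lemma HasDensity.image_zero (hf : LipschitzWith K f) (hf' : AntilipschitzWith K' f)
    (h : HasDensity U x 0) : HasDensity (f '' U) (f x) 0 := by
  obtain ⟨C, hC, hfC⟩ : ∃ C : ℝ≥0, 0 < C ∧ AntilipschitzWith C f :=
    ⟨K' + 1, by positivity, fun y z => (hf' y z).trans <| by gcongr; exact le_self_add⟩
  have hscale : Tendsto (fun r : ℝ => C * r) (𝓝[>] 0) (𝓝[>] 0) :=
    tendsto_iff_comap.2 (comap_mulLeft_nhdsGT_zero (NNReal.coe_pos.2 hC)).ge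
  have hlim := ENNReal.Tendsto.const_mul (a := (K * C) ^ finrank ℝ (EuclideanSpace ℝ (Fin n)))
    (h.comp hscale) (Or.inr (by finiteness))
  rw [mul_zero] at hlim
  exact tendsto_of_tendsto_of_tendsto_of_le_of_le tendsto_const_nhds hlim (fun _ => zero_le)
    (addHaar_image_inter_ball_div_le volume hf hfC hC U x)

lemma HasDensity.image_one (hf : LipschitzWith K f) (hf' : AntilipschitzWith K' f)
    (hsurj : Surjective f) (h : HasDensity U x 1) : HasDensity (f '' U) (f x) 1 := by
  have hcompl : HasDensity (toMeasurable volume U)ᶜ x 0 :=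
    (hasDensity_toMeasurable_iff.2 h).compl_zero
      (measurableSet_toMeasurable _ _).nullMeasurableSet
  have himage : HasDensity (f '' toMeasurable volume U)ᶜ (f x) 0 :=
    image_compl_eq ⟨hf'.injective, hsurj⟩ ▸ hcompl.image_zero hf hf'
  exact (hasDensity_image_toMeasurable_iff hf).1 himage.one_of_compl_zero

end Density

theorem essentialBoundary_image_biLipschitz_general {n : ℕ} {K K' : ℝ≥0}
    {f : EuclideanSpace ℝ (Fin n) → EuclideanSpace ℝ (Fin n)} (hf : LipschitzWith K f)
    (hf' : AntilipschitzWith K' f) (hsurj : Surjective f) (U : Set (EuclideanSpace ℝ (Fin n))) :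
    (∀ x : EuclideanSpace ℝ (Fin n),
      (HasDensity U x 0 ↔ HasDensity (f '' U) (f x) 0) ∧
      (HasDensity U x 1 ↔ HasDensity (f '' U) (f x) 1)) ∧
    essentialBoundary (f '' U) = f '' essentialBoundary U := by
  obtain ⟨g, hgf, hfg⟩ := bijective_iff_has_inverse.1 ⟨hf'.injective, hsurj⟩
  have hg : LipschitzWith K' g := hf'.to_rightInverse hfg
  have hg' : AntilipschitzWith K g := hf.to_rightInverse hfg
  have hzero (x) : HasDensity U x 0 ↔ HasDensity (f '' U) (f x) 0 :=
    ⟨.image_zero hf hf', fun h => by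
      simpa only [hgf.image_image, hgf x] using h.image_zero hg hg'⟩
  have hone (x) : HasDensity U x 1 ↔ HasDensity (f '' U) (f x) 1 :=
    ⟨.image_one hf hf' hsurj, fun h => by
      simpa only [hgf.image_image, hgf x] using h.image_one hg hg' hgf.surjective⟩
  refine ⟨fun x => ⟨hzero x, hone x⟩, ?_⟩
  ext y
  obtain ⟨x, rfl⟩ := hsurj y
  simp only [essentialBoundary, hf'.injective.mem_set_image, mem_ofPred_eq, hzero, hone]

/-- An `L`-bi-Lipschitz bijection `φ : ℝⁿ → ℝⁿ` preserves points of density `0` and points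
of density `1` of any Borel set, so the essential boundary transforms naturally:
`∂*(φ(U)) = φ(∂*U)`. -/
theorem essentialBoundary_image_biLipschitz
    (n : ℕ) (L : ℝ) (hL : 0 < L)
    (φ : EuclideanSpace ℝ (Fin n) → EuclideanSpace ℝ (Fin n))
    (hbij : Function.Bijective φ)
    (hbl : ∀ x y : EuclideanSpace ℝ (Fin n),
      (1 / L) * ‖x - y‖ ≤ ‖φ x - φ y‖ ∧ ‖φ x - φ y‖ ≤ L * ‖x - y‖)
    (U : Set (EuclideanSpace ℝ (Fin n))) (hU : MeasurableSet U) :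
    (∀ x : EuclideanSpace ℝ (Fin n),
      (HasDensity U x 0 ↔ HasDensity (φ '' U) (φ x) 0) ∧
      (HasDensity U x 1 ↔ HasDensity (φ '' U) (φ x) 1)) ∧
    essentialBoundary (φ '' U) = φ '' essentialBoundary U := by
  lift L to ℝ≥0 using hL.le
  exact essentialBoundary_image_biLipschitz_general
    (LipschitzWith.of_dist_le_mul fun x y => by simpa only [dist_eq_norm] using (hbl x y).2)
    (AntilipschitzWith.of_le_mul_dist fun x y => by
      simpa only [dist_eq_norm, one_div, inv_mul_le_iff₀ hL] using (hbl x y).1) hbij.2 U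
end
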